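/- arXiv:1412.1499 — 2 statements merged into one kernel-verified Lean document; each statement's English description precedes it below -/
import Mathlib

section
/- For |x| < 1 let Φ(x) = Σ_{k,l≥0} (4k+1) x^{(4k+1)(4l+1)} + Σ_{k,l≥0} (4k+3) x^{(4k+3)(4l+3)} and Ψ(x) = Σ_{k,l≥0} (k+l+1) x^{(4k+1)(4l+3)}, and let F(x) = ∏_{n=1}^∞ (1 − xⁿ). Then for every complex x with |x| < 1, Φ(x) + 4 Ψ(x) = x · F(x⁴)⁸ / F(x²)⁴. (Equivalently, the two generating series of the open Gromov–Witten potential of ℙ¹_{2,2,2,2} combine into the eta quotient η(q_d⁴)⁸/η(q_d²)⁴, whose q-expansion is Σ_{n odd} σ₁(n) q_dⁿ.) -/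
/-!
Expand `∏_{i<2N} (w - b qⁱ) / ∏_{i≤2N} (w - qⁱ)` in partial fractions at `w = q ^ N / z`. As `N → ∞`
this becomes Kronecker's formula, which writes `∑_{n ∈ ℤ} bⁿ / (1 - z qⁿ)` as a quotient of theta
products. At `b = x`, `q = x ^ 2`, `z = -x` the quotient is `2 F(x⁴)⁴ / F(x²)²`. On the other hand,
for `q = b ^ 2` the square of the series can be computed directly, since its off-diagonals
telescope: it is a sum of two Lambert series, which for `z = -x` add up to
`4 x⁻¹ ∑_{n odd} σ₁(n) xⁿ`. Sorting the pairs of odd numbers `(d, m)` in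
`∑_{n odd} σ₁(n) xⁿ = ∑ d x^(d m)` by their residues modulo `4` gives `Φ + 4 Ψ`; there `Ψ` collects
the pairs with `d ≢ m`, because `(4k + 1) + (4l + 3) = 4 (k + l + 1)`.
-/

open scoped BigOperators

/-- The Euler product `F(x) = ∏_{n=1}^∞ (1 − xⁿ)`. -/
noncomputable def eulerF (x : ℂ) : ℂ := ∏' n : ℕ, (1 - x ^ (n + 1))

/-- `Φ(x) = Σ_{k,l≥0} (4k+1) x^{(4k+1)(4l+1)} + Σ_{k,l≥0} (4k+3) x^{(4k+3)(4l+3)}`,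
the coefficient of `(xy)²+(xw)²+(zy)²+(zw)²` in the open Gromov–Witten
potential of `ℙ¹_{2,2,2,2}`. -/
noncomputable def Phi2222 (x : ℂ) : ℂ :=
  (∑' p : ℕ × ℕ, (4 * (p.1 : ℂ) + 1) * x ^ ((4 * p.1 + 1) * (4 * p.2 + 1)))
    + ∑' p : ℕ × ℕ, (4 * (p.1 : ℂ) + 3) * x ^ ((4 * p.1 + 3) * (4 * p.2 + 3))

/-- `Ψ(x) = Σ_{k,l≥0} (k+l+1) x^{(4k+1)(4l+3)}`, the coefficient of `xyzw` in
the open Gromov–Witten potential of `ℙ¹_{2,2,2,2}`. -/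
noncomputable def Psi2222 (x : ℂ) : ℂ :=
  ∑' p : ℕ × ℕ, ((p.1 : ℂ) + (p.2 : ℂ) + 1) * x ^ ((4 * p.1 + 1) * (4 * p.2 + 3))

/-- The finite `q`-Pochhammer symbol `(a; q)_n`, used to state the finite partial fraction identity
whose limit is Kronecker's formula. -/
def qPochhammer {R : Type*} [CommRing R] (a q : R) (n : ℕ) : R :=
  ∏ i ∈ Finset.range n, (1 - a * q ^ i)

section Finite

open Finset Polynomial

variable {K : Type*} [Field K] {b q w z : K}

theorem eval_div_prod_sub_eq_sum {ι : Type*} [DecidableEq ι] {s : Finset ι} {v : ι → K} {P : K[X]}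
    (hv : Set.InjOn v s) (hP : P.degree < #s) (hw : ∀ i ∈ s, w ≠ v i) :
    P.eval w / ∏ i ∈ s, (w - v i) =
      ∑ i ∈ s, P.eval (v i) / (∏ j ∈ s.erase i, (v i - v j)) / (w - v i) := by
  have hne : (Lagrange.nodal s v).eval w ≠ 0 := Lagrange.eval_nodal_not_at_node hw
  rw [← Lagrange.eval_nodal, div_eq_iff hne, mul_comm]
  conv_lhs => rw [Lagrange.eq_interpolate hv hP, Lagrange.eval_interpolate_not_at_node _ hw]
  congr 1
  refine sum_congr rfl fun i _ ↦ ?_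
  rw [Lagrange.nodalWeight, prod_inv_distrib]
  ring

theorem prod_range_pow_mul_sub (hb : b ≠ 0) (w : K) (j : ℕ) :
    ∏ i ∈ range j, (q ^ j * w - b * q ^ i) =
      (∏ i ∈ range j, -q ^ i) * (b ^ j * qPochhammer (q * w / b) q j) := by
  have hreflect : qPochhammer (q * w / b) q j =
      ∏ i ∈ range j, (1 - q * w / b * q ^ (j - 1 - i)) := (prod_range_reflect _ j).symm
  have hconst := pow_card_mul_prod (s := range j) (b := b)
    (f := fun i ↦ 1 - q * w / b * q ^ (j - 1 - i))
  rw [card_range] at hconst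
  rw [hreflect, hconst, ← prod_mul_distrib]
  refine prod_congr rfl fun i hi ↦ ?_
  have hpow : q ^ j = q ^ i * q ^ (j - 1 - i) * q := by
    rw [← pow_add, ← pow_succ]
    congr 1
    have := mem_range.1 hi
    omega
  rw [hpow]
  field_simp
  ring

theorem prod_range_pow_mul_sub_pow_add (b : K) (hw : w ≠ 0) (j k : ℕ) :
    ∏ i ∈ range k, (q ^ j * w - b * q ^ (j + i)) =
      (q ^ j * w) ^ k * qPochhammer (b / w) q k := by
  have hconst := pow_card_mul_prod (s := range k) (b := q ^ j * w)
    (f := fun i ↦ 1 - b / w * q ^ i)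
  rw [card_range] at hconst
  rw [qPochhammer, hconst]
  refine prod_congr rfl fun i _ ↦ ?_
  rw [pow_add]
  field_simp

theorem prod_range_add_pow_mul_sub (hb : b ≠ 0) (hw : w ≠ 0) (j k : ℕ) :
    ∏ i ∈ range (j + k), (q ^ j * w - b * q ^ i) =
      (∏ i ∈ range j, -q ^ i) * (b ^ j * qPochhammer (q * w / b) q j) *
        ((q ^ j * w) ^ k * qPochhammer (b / w) q k) := by
  rw [prod_range_add, prod_range_pow_mul_sub hb, prod_range_pow_mul_sub_pow_add b hw]

theorem prod_range_erase {M : Type*} [CommMonoid M] (f : ℕ → M) (j k : ℕ) :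
    ∏ i ∈ (range (j + k + 1)).erase j, f i =
      (∏ i ∈ range j, f i) * ∏ i ∈ range k, f (j + 1 + i) := by
  have hsplit : (range (j + k + 1)).erase j =
      range j ∪ (range k).map (addLeftEmbedding (j + 1)) := by
    ext i
    simp only [mem_erase, mem_range, mem_union, mem_map, addLeftEmbedding_apply]
    constructor
    · intro h
      by_cases hi : i < j
      · exact .inl hi
      · exact .inr ⟨i - (j + 1), by omega, by omega⟩
    · rintro (h | ⟨l, hl, rfl⟩) <;> omega
  have hdisj : Disjoint (range j) ((range k).map (addLeftEmbedding (j + 1))) := by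
    simp only [disjoint_left, mem_range, mem_map, addLeftEmbedding_apply]
    rintro i hi ⟨l, -, rfl⟩
    omega
  rw [hsplit, prod_union hdisj, prod_map]
  rfl

theorem prod_range_erase_pow_sub_pow (q : K) (j k : ℕ) :
    ∏ i ∈ (range (j + k + 1)).erase j, (q ^ j - q ^ i) =
      (∏ i ∈ range j, -q ^ i) * qPochhammer q q j * ((q ^ j) ^ k * qPochhammer q q k) := by
  have hlower := prod_range_pow_mul_sub (q := q) one_ne_zero 1 j
  have hupper := prod_range_pow_mul_sub_pow_add (q := q) q one_ne_zero j k
  simp only [mul_one, one_mul, one_pow, div_one, ← pow_succ', add_right_comm j _ 1]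
    at hlower hupper
  rw [prod_range_erase, hlower, hupper]

theorem prod_range_neg_pow_ne_zero (hq : q ≠ 0) (j : ℕ) : ∏ i ∈ range j, -q ^ i ≠ 0 :=
  prod_ne_zero_iff.2 fun i _ ↦ neg_ne_zero.2 (pow_ne_zero i hq)

theorem prod_div_prod_erase_eq_qPochhammer (hq : q ≠ 0) (hb : b ≠ 0) (j k : ℕ) :
    (∏ i ∈ range (j + k), (q ^ j - b * q ^ i)) /
        ∏ i ∈ (range (j + k + 1)).erase j, (q ^ j - q ^ i) =
      b ^ j * (qPochhammer (q / b) q j / qPochhammer q q j *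
        (qPochhammer b q k / qPochhammer q q k)) := by
  have hnum := prod_range_add_pow_mul_sub (q := q) hb one_ne_zero j k
  simp only [mul_one, div_one] at hnum
  rw [hnum, prod_range_erase_pow_sub_pow, mul_div_mul_comm,
    mul_div_mul_left _ _ (prod_range_neg_pow_ne_zero hq j),
    mul_div_mul_left _ _ (pow_ne_zero k (pow_ne_zero j hq)), mul_div_assoc, mul_assoc]

theorem prod_div_prod_eq_qPochhammer (hq : q ≠ 0) (hb : b ≠ 0) (hz : z ≠ 0) (N : ℕ) :
    (∏ i ∈ range (2 * N), (q ^ N / z - b * q ^ i)) /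
        ∏ i ∈ range (2 * N + 1), (q ^ N / z - q ^ i) =
      b ^ N * (z / q ^ N) * (qPochhammer (b * z) q N * qPochhammer (q / (b * z)) q N /
        (qPochhammer z q (N + 1) * qPochhammer (q / z) q N)) := by
  have hnum := prod_range_add_pow_mul_sub (q := q) hb (inv_ne_zero hz) N N
  have hden := prod_range_add_pow_mul_sub (q := q) one_ne_zero (inv_ne_zero hz) N (N + 1)
  simp only [← two_mul, ← add_assoc, ← div_eq_mul_inv, one_mul, one_pow, div_one,
    div_inv_eq_mul, div_div, mul_comm z b] at hnum hden
  have hcancel : (q ^ N / z) ^ N / (q ^ N / z) ^ (N + 1) = z / q ^ N := by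
    have := div_ne_zero (pow_ne_zero N hq) hz
    rw [pow_succ]
    field_simp
  rw [hnum, hden, mul_div_mul_comm, mul_div_mul_left _ _ (prod_range_neg_pow_ne_zero hq N),
    mul_div_mul_comm, hcancel]
  ring

theorem sum_pow_mul_qPochhammer_div_sub_pow (hq : q ≠ 0) (hb : b ≠ 0) (hz : z ≠ 0)
    (hinj : Function.Injective fun n : ℕ ↦ q ^ n) (hpole : ∀ n : ℤ, z * q ^ n ≠ 1) (N : ℕ) :
    ∑ j ∈ range (2 * N + 1), b ^ j * (qPochhammer (q / b) q j / qPochhammer q q j *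
        (qPochhammer b q (2 * N - j) / qPochhammer q q (2 * N - j))) / (q ^ N / z - q ^ j) =
      b ^ N * (z / q ^ N) * (qPochhammer (b * z) q N * qPochhammer (q / (b * z)) q N /
        (qPochhammer z q (N + 1) * qPochhammer (q / z) q N)) := by
  let P : K[X] := ∏ i ∈ range (2 * N), (X - C (b * q ^ i))
  have hP : P.degree < #(range (2 * N + 1)) := by
    simp only [P, degree_prod, degree_X_sub_C, sum_const, card_range, nsmul_one]
    exact_mod_cast Nat.lt_succ_self (2 * N)
  have hnode : ∀ j ∈ range (2 * N + 1), q ^ N / z ≠ q ^ j := by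
    intro j _ h
    refine hpole (j - N) ?_
    rw [zpow_sub₀ hq, zpow_natCast, zpow_natCast, ← h]
    field_simp
  have hPeval (t : K) : P.eval t = ∏ i ∈ range (2 * N), (t - b * q ^ i) := by
    simp [P, eval_prod]
  rw [← prod_div_prod_eq_qPochhammer hq hb hz, ← hPeval,
    eval_div_prod_sub_eq_sum hinj.injOn hP hnode]
  refine sum_congr rfl fun j hj ↦ ?_
  obtain ⟨k, hk⟩ := Nat.exists_eq_add_of_le (Nat.lt_succ_iff.1 (mem_range.1 hj))
  rw [hPeval, hk, Nat.add_sub_cancel_left, prod_div_prod_erase_eq_qPochhammer hq hb]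

/-- The partial fraction expansion in `w` of `∏_{i<2N} (w - b qⁱ) / ∏_{i≤2N} (w - qⁱ)`, evaluated at
`w = q ^ N / z` and reindexed by `n = j - N`. -/
theorem sum_Icc_zpow_div_one_sub (hq : q ≠ 0) (hb : b ≠ 0) (hz : z ≠ 0)
    (hinj : Function.Injective fun n : ℕ ↦ q ^ n) (hpole : ∀ n : ℤ, z * q ^ n ≠ 1) (N : ℕ) :
    ∑ n ∈ Icc (-N : ℤ) N, b ^ n / (1 - z * q ^ n) *
        (qPochhammer (q / b) q (N + n).toNat / qPochhammer q q (N + n).toNat *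
        (qPochhammer b q (N - n).toNat / qPochhammer q q (N - n).toNat)) =
      qPochhammer (b * z) q N * qPochhammer (q / (b * z)) q N /
        (qPochhammer z q (N + 1) * qPochhammer (q / z) q N) := by
  have hbN := pow_ne_zero N hb
  have hqN := pow_ne_zero N hq
  have hfactor : b ^ N * (z / q ^ N) ≠ 0 := mul_ne_zero hbN (div_ne_zero hz hqN)
  rw [← mul_right_inj' hfactor, ← sum_pow_mul_qPochhammer_div_sub_pow hq hb hz hinj hpole, mul_sum]
  refine sum_nbij' (fun n ↦ (N + n).toNat) (fun j ↦ (j : ℤ) - N) ?_ ?_ ?_ ?_ fun n hn ↦ ?_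
  · intro n hn; simp only [mem_Icc, mem_range] at *; omega
  · intro n hn; simp only [mem_Icc, mem_range] at *; omega
  · intro n hn; simp only [mem_Icc] at *; omega
  · intro n hn; simp only [mem_range] at *; omega
  obtain ⟨j, hj⟩ : ∃ j : ℕ, n = j - N := ⟨(N + n).toNat, by simp only [mem_Icc] at hn; omega⟩
  have hden : 1 - z * q ^ n ≠ 0 := sub_ne_zero.2 (hpole n).symm
  have hj₁ : (N + n).toNat = j := by omega
  have hj₂ : (N - n).toNat = 2 * N - j := by omega
  rw [hj, zpow_sub₀ hq, zpow_natCast, zpow_natCast] at hden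
  have hfrac : b ^ j / (q ^ N / z - q ^ j) = b ^ N * (z / q ^ N) * (b ^ n / (1 - z * q ^ n)) := by
    rw [hj, zpow_sub₀ hq, zpow_sub₀ hb, zpow_natCast, zpow_natCast, zpow_natCast, zpow_natCast,
      show q ^ N / z - q ^ j = q ^ N / z * (1 - z * (q ^ j / q ^ N)) by field_simp]
    field_simp
  rw [hj₁, hj₂, mul_div_right_comm, hfrac, mul_assoc _ (b ^ n / _)]

end Finite

/-- The infinite `q`-Pochhammer symbol `(a; q)_∞`, the building block of theta quotients. It takes
the junk value `1` of `∏'` when the product does not converge. -/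
noncomputable def qPochhammerInf {R : Type*} [CommRing R] [TopologicalSpace R] (a q : R) : R :=
  ∏' i : ℕ, (1 - a * q ^ i)

/-- Kronecker's bilateral series `∑_{n ∈ ℤ} bⁿ / (1 - z qⁿ)`, meant for `0 < |q| < |b| < 1` and `z`
off `q^ℤ ∪ {0}`; its square is a sum of Lambert series when `q = b²`. -/
noncomputable def kroneckerSeries {K : Type*} [Field K] [TopologicalSpace K] (b q z : K) : K :=
  ∑' n : ℤ, b ^ n / (1 - z * q ^ n)

section Infinite

open Filter Finset Topology

variable {𝕜 : Type*} [NormedField 𝕜] {a b q r z : 𝕜}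

theorem norm_pow_lt_one (hq : ‖q‖ < 1) {n : ℕ} (hn : n ≠ 0) : ‖q ^ n‖ < 1 := by
  simpa using pow_lt_one₀ (norm_nonneg q) hq hn

theorem norm_sq_lt_norm (hq₀ : q ≠ 0) (hq : ‖q‖ < 1) : ‖q ^ 2‖ < ‖q‖ := by
  simpa [sq] using mul_lt_of_lt_one_left (norm_pos_iff.2 hq₀) hq

theorem one_sub_pow_ne_zero (hq : ‖q‖ < 1) {n : ℕ} (hn : n ≠ 0) : 1 - q ^ n ≠ 0 :=
  sub_ne_zero.2 fun h ↦ (norm_pow_lt_one hq hn).ne (h ▸ norm_one)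

theorem one_sub_mul_pow_ne_zero (ha : ‖a‖ < 1) (hq : ‖q‖ ≤ 1) (i : ℕ) : 1 - a * q ^ i ≠ 0 := by
  intro h
  have hnorm : ‖a * q ^ i‖ = 1 := by rw [← sub_eq_zero.1 h, norm_one]
  rw [norm_mul, norm_pow] at hnorm
  exact (mul_lt_one_of_nonneg_of_lt_one_left (norm_nonneg a) ha
    (pow_le_one₀ (norm_nonneg q) hq)).ne hnorm

theorem pow_injective_of_norm_lt_one (hq₀ : q ≠ 0) (hq : ‖q‖ < 1) :
    Function.Injective fun n : ℕ ↦ q ^ n := by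
  intro m n h
  refine (pow_right_strictAnti₀ (norm_pos_iff.2 hq₀) hq).injective ?_
  simpa using congrArg norm h

theorem inv_one_sub_mul_zpow_neg (hq₀ : q ≠ 0) (hz : z ≠ 0) (n : ℕ) :
    (1 - z * q ^ (-n : ℤ))⁻¹ = -z⁻¹ * (q ^ n * (1 - z⁻¹ * q ^ n)⁻¹) := by
  have hqn := pow_ne_zero n hq₀
  rw [zpow_neg, zpow_natCast,
    show 1 - z * (q ^ n)⁻¹ = -z / q ^ n * (1 - z⁻¹ * q ^ n) by field_simp; ring]
  field_simp

theorem tendsto_inv_one_sub_mul_pow (a : 𝕜) (hq : ‖q‖ < 1) :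
    Tendsto (fun n : ℕ ↦ (1 - a * q ^ n)⁻¹) atTop (𝓝 1) := by
  simpa using (((tendsto_pow_atTop_nhds_zero_of_norm_lt_one hq).const_mul a).const_sub 1).inv₀
    (by simp)

theorem tendsto_inv_one_sub_mul_zpow_neg (hq₀ : q ≠ 0) (hq : ‖q‖ < 1) (hz : z ≠ 0) :
    Tendsto (fun n : ℕ ↦ (1 - z * q ^ (-n : ℤ))⁻¹) atTop (𝓝 0) := by
  simpa only [inv_one_sub_mul_zpow_neg hq₀ hz, zero_mul, mul_zero] using
    ((tendsto_pow_atTop_nhds_zero_of_norm_lt_one hq).mul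
      (tendsto_inv_one_sub_mul_pow z⁻¹ hq)).const_mul (-z⁻¹)

theorem summable_norm_pow_div_one_sub (hr : ‖r‖ < 1) (a : 𝕜) (hq : ‖q‖ < 1) :
    Summable fun n : ℕ ↦ ‖r ^ n / (1 - a * q ^ n)‖ := by
  have hlim := (tendsto_inv_one_sub_mul_pow a hq).norm
  rw [← Nat.cofinite_eq_atTop] at hlim
  have hgeom : Summable fun n : ℕ ↦ ‖‖r ^ n‖‖ := by
    simpa using summable_geometric_of_lt_one (norm_nonneg r) hr
  simpa [div_eq_mul_inv] using hgeom.mul_tendsto_const hlim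

theorem summable_norm_zpow_div_one_sub (hq₀ : q ≠ 0) (hqb : ‖q‖ < ‖b‖) (hb : ‖b‖ < 1)
    (hz : z ≠ 0) : Summable fun n : ℤ ↦ ‖b ^ n / (1 - z * q ^ n)‖ := by
  have hb₀ : b ≠ 0 := norm_pos_iff.1 ((norm_nonneg q).trans_lt hqb)
  have hq := hqb.trans hb
  have hqb' : ‖q / b‖ < 1 := by rwa [norm_div, div_lt_one (norm_pos_iff.2 hb₀)]
  have hneg (n : ℕ) : b ^ (-n : ℤ) / (1 - z * q ^ (-n : ℤ)) =
      -z⁻¹ * ((q / b) ^ n / (1 - z⁻¹ * q ^ n)) := by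
    rw [div_eq_mul_inv, inv_one_sub_mul_zpow_neg hq₀ hz, zpow_neg, zpow_natCast, div_pow]
    ring
  refine Summable.of_nat_of_neg ?_ ?_
  · simpa only [zpow_natCast] using summable_norm_pow_div_one_sub hb z hq
  · simpa only [hneg, norm_mul] using (summable_norm_pow_div_one_sub hqb' z⁻¹ hq).mul_left ‖-z⁻¹‖

variable [CompleteSpace 𝕜]

theorem multipliable_one_sub_mul_pow (a : 𝕜) (hq : ‖q‖ < 1) :
    Multipliable fun i : ℕ ↦ 1 - a * q ^ i := by
  simp only [sub_eq_add_neg]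
  refine multipliable_one_add_of_summable ?_
  simpa using (summable_geometric_of_lt_one (norm_nonneg q) hq).mul_left ‖a‖

theorem tendsto_qPochhammer (a : 𝕜) (hq : ‖q‖ < 1) :
    Tendsto (qPochhammer a q) atTop (𝓝 (qPochhammerInf a q)) :=
  (multipliable_one_sub_mul_pow a hq).tendsto_prod_tprod_nat

theorem qPochhammerInf_ne_zero (hq : ‖q‖ < 1) (h : ∀ i : ℕ, 1 - a * q ^ i ≠ 0) :
    qPochhammerInf a q ≠ 0 := by
  simp only [qPochhammerInf, sub_eq_add_neg] at h ⊢
  refine tprod_one_add_ne_zero_of_summable h ?_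
  simpa using (summable_geometric_of_lt_one (norm_nonneg q) hq).mul_left ‖a‖

theorem qPochhammerInf_mul_neg (a : 𝕜) (hq : ‖q‖ < 1) :
    qPochhammerInf a q * qPochhammerInf (-a) q = qPochhammerInf (a ^ 2) (q ^ 2) := by
  rw [qPochhammerInf, qPochhammerInf, ← (multipliable_one_sub_mul_pow a hq).tprod_mul
    (multipliable_one_sub_mul_pow (-a) hq)]
  exact tprod_congr fun i ↦ by ring

theorem qPochhammerInf_even_mul_odd (a : 𝕜) (hq : ‖q‖ < 1) :
    qPochhammerInf a (q ^ 2) * qPochhammerInf (a * q) (q ^ 2) = qPochhammerInf a q := by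
  have hq₂ := norm_pow_lt_one hq two_ne_zero
  have heven (k : ℕ) : 1 - a * q ^ (2 * k) = 1 - a * (q ^ 2) ^ k := by rw [pow_mul]
  have hodd (k : ℕ) : 1 - a * q ^ (2 * k + 1) = 1 - a * q * (q ^ 2) ^ k := by ring
  have h := tprod_even_mul_odd (f := fun i ↦ 1 - a * q ^ i)
    (by simpa only [heven] using multipliable_one_sub_mul_pow a hq₂)
    (by simpa only [hodd] using multipliable_one_sub_mul_pow (a * q) hq₂)
  simpa only [heven, hodd, qPochhammerInf] using h

theorem qPochhammerInf_eq_one_sub_mul (a : 𝕜) (hq : ‖q‖ < 1) :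
    qPochhammerInf a q = (1 - a) * qPochhammerInf (a * q) q := by
  have hshift (i : ℕ) : 1 - a * q ^ (i + 1) = 1 - a * q * q ^ i := by ring
  have h := tprod_eq_zero_mul' (f := fun i : ℕ ↦ 1 - a * q ^ i)
    (by simpa only [hshift] using multipliable_one_sub_mul_pow (a * q) hq)
  simpa only [hshift, pow_zero, mul_one, qPochhammerInf] using h

theorem exists_norm_qPochhammer_div_le (a : 𝕜) (hq : ‖q‖ < 1) :
    ∃ C, ∀ n, ‖qPochhammer a q n / qPochhammer q q n‖ ≤ C := by
  have hne := qPochhammerInf_ne_zero hq (one_sub_mul_pow_ne_zero hq hq.le)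
  have hlim := (tendsto_qPochhammer a hq).div (tendsto_qPochhammer q hq) hne
  obtain ⟨C, hC⟩ := (Metric.isBounded_range_of_tendsto _ hlim).exists_norm_le
  exact ⟨C, fun n ↦ hC _ ⟨n, rfl⟩⟩

theorem tendsto_sum_Icc_zpow_div_one_sub (hq₀ : q ≠ 0) (hqb : ‖q‖ < ‖b‖) (hb : ‖b‖ < 1)
    (hz : z ≠ 0) :
    Tendsto (fun N : ℕ ↦ ∑ n ∈ Icc (-N : ℤ) N, b ^ n / (1 - z * q ^ n) *
        (qPochhammer (q / b) q (N + n).toNat / qPochhammer q q (N + n).toNat *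
        (qPochhammer b q (N - n).toNat / qPochhammer q q (N - n).toNat))) atTop
      (𝓝 (kroneckerSeries b q z * (qPochhammerInf (q / b) q / qPochhammerInf q q *
        (qPochhammerInf b q / qPochhammerInf q q)))) := by
  have hq := hqb.trans hb
  have hne := qPochhammerInf_ne_zero hq (one_sub_mul_pow_ne_zero hq hq.le)
  have hlim (a : 𝕜) := (tendsto_qPochhammer a hq).div (tendsto_qPochhammer q hq) hne
  obtain ⟨C, hC⟩ := exists_norm_qPochhammer_div_le (q / b) hq
  obtain ⟨D, hD⟩ := exists_norm_qPochhammer_div_le b hq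
  have hC₀ : 0 ≤ C := (norm_nonneg _).trans (hC 0)
  rw [kroneckerSeries, ← tsum_mul_right]
  refine Tendsto.congr (fun N ↦ (sum_eq_tsum_indicator _ _).symm) ?_
  refine tendsto_tsum_of_dominated_convergence
    ((summable_norm_zpow_div_one_sub hq₀ hqb hb hz).mul_right (C * D)) (fun n ↦ ?_)
    (.of_forall fun N n ↦ ?_)
  · have hadd : Tendsto (fun N : ℕ ↦ (N + n).toNat) atTop atTop :=
      tendsto_atTop_atTop.2 fun B ↦ ⟨B + n.natAbs, fun N hN ↦ by omega⟩
    have hsub : Tendsto (fun N : ℕ ↦ (N - n).toNat) atTop atTop :=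
      tendsto_atTop_atTop.2 fun B ↦ ⟨B + n.natAbs, fun N hN ↦ by omega⟩
    refine ((((hlim (q / b)).comp hadd).mul ((hlim b).comp hsub)).const_mul _).congr' ?_
    filter_upwards [eventually_ge_atTop n.natAbs] with N hN
    rw [Set.indicator_of_mem (by simp only [coe_Icc, Set.mem_Icc]; omega)]
    rfl
  · refine (norm_indicator_le_norm_self _ _).trans ?_
    rw [norm_mul, norm_mul]
    gcongr
    exacts [hC _, hD _]

theorem kroneckerSeries_eq (hq₀ : q ≠ 0) (hqb : ‖q‖ < ‖b‖) (hb : ‖b‖ < 1) (hz : z ≠ 0)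
    (hpole : ∀ n : ℤ, z * q ^ n ≠ 1) :
    kroneckerSeries b q z =
      qPochhammerInf q q ^ 2 * (qPochhammerInf (b * z) q * qPochhammerInf (q / (b * z)) q) /
        (qPochhammerInf b q * qPochhammerInf (q / b) q *
          (qPochhammerInf z q * qPochhammerInf (q / z) q)) := by
  have hb₀ : b ≠ 0 := norm_pos_iff.1 ((norm_nonneg q).trans_lt hqb)
  have hq := hqb.trans hb
  have hqb' : ‖q / b‖ < 1 := by rwa [norm_div, div_lt_one (norm_pos_iff.2 hb₀)]
  have hqInf := qPochhammerInf_ne_zero hq (one_sub_mul_pow_ne_zero hq hq.le)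
  have hbInf := qPochhammerInf_ne_zero hq (one_sub_mul_pow_ne_zero hb hq.le)
  have hqbInf := qPochhammerInf_ne_zero hq (one_sub_mul_pow_ne_zero hqb' hq.le)
  have hzInf : qPochhammerInf z q ≠ 0 := qPochhammerInf_ne_zero hq fun i ↦
    sub_ne_zero.2 fun h ↦ hpole i (by rw [zpow_natCast, h])
  have hqzInf : qPochhammerInf (q / z) q ≠ 0 := qPochhammerInf_ne_zero hq fun i ↦
    sub_ne_zero.2 fun h ↦ hpole (-(i + 1 : ℕ)) (by
      rw [zpow_neg, zpow_natCast, pow_succ']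
      field_simp at h ⊢
      exact h)
  have hsum := tendsto_sum_Icc_zpow_div_one_sub hq₀ hqb hb hz
  have hprod := ((tendsto_qPochhammer (b * z) hq).mul (tendsto_qPochhammer (q / (b * z)) hq)).div
    (((tendsto_qPochhammer z hq).comp (tendsto_add_atTop_nat 1)).mul
      (tendsto_qPochhammer (q / z) hq)) (mul_ne_zero hzInf hqzInf)
  have hlimits := tendsto_nhds_unique hsum (hprod.congr fun N ↦ (sum_Icc_zpow_div_one_sub hq₀ hb₀ hz
    (pow_injective_of_norm_lt_one hq₀ hq) hpole N).symm)
  field_simp at hlimits ⊢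
  exact hlimits

end Infinite

section BilateralSums

open Filter Finset Topology

theorem hasSum_int_sub_add {E : Type*} [AddCommGroup E] [TopologicalSpace E]
    [IsTopologicalAddGroup E] [T2Space E] {g : ℤ → E} {s t : E}
    (hg : Summable fun n : ℤ ↦ g n - g (n + 1))
    (hneg : Tendsto (fun N : ℕ ↦ g (-N)) atTop (𝓝 s)) (hpos : Tendsto (fun N : ℕ ↦ g N) atTop (𝓝 t))
    (d : ℕ) : HasSum (fun n : ℤ ↦ g n - g (n + d)) (d • (s - t)) := by
  have hstep : HasSum (fun n : ℤ ↦ g n - g (n + 1)) (s - t) := by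
    have hlim := SummationFilter.hasSum_symmetricIco_int_iff.1
      (hg.hasSum.mono_left SummationFilter.LeAtTop.le_atTop)
    simp only [sum_Ico_int_sub] at hlim
    exact tendsto_nhds_unique hlim (hneg.sub hpos) ▸ hg.hasSum
  induction d with
  | zero => simp
  | succ d ih =>
    rw [succ_nsmul]
    convert ih.add ((Equiv.addRight (d : ℤ)).hasSum_iff.2 hstep) using 1
    ext n
    simp [add_assoc]

theorem sq_tsum_int_eq {R : Type*} [NormedCommRing R] [CompleteSpace R] {u : ℤ → R}
    (hu : Summable fun n ↦ ‖u n‖) :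
    (∑' n, u n) ^ 2 = ∑' n, u n ^ 2 + 2 * ∑' d : ℕ+, ∑' n, u n * u (n + d) := by
  let e : ℤ × ℤ ≃ ℤ × ℤ := (Equiv.prodComm ℤ ℤ).trans (Equiv.prodShear (.refl ℤ) Equiv.addLeft)
  have hsum : Summable fun p : ℤ × ℤ ↦ u p.2 * u (p.2 + p.1) :=
    e.summable_iff.2 (summable_mul_of_summable_norm hu hu)
  have heven : (fun d : ℤ ↦ ∑' n, u n * u (n + d)).Even := by
    intro d
    refine ((Equiv.addRight d).tsum_eq fun n ↦ u n * u (n + -d)).symm.trans ?_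
    exact tsum_congr fun n ↦ by simp [mul_comm]
  rw [sq, tsum_mul_tsum_of_summable_norm hu hu, ← e.tsum_eq]
  refine hsum.tsum_prod.trans ?_
  rw [tsum_int_eq_zero_add_two_mul_tsum_pnat heven hsum.prod, nsmul_eq_mul]
  simp [sq]

end BilateralSums

section KroneckerSquare

variable {𝕜 : Type*} [NormedField 𝕜] {b z : 𝕜}

theorem mul_zpow_div_one_sub_mul_shift (hb₀ : b ≠ 0) (hb : ‖b‖ < 1)
    (hpole : ∀ n : ℤ, z * (b ^ 2) ^ n ≠ 1) {d : ℕ} (hd : d ≠ 0) (n : ℤ) :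
    z * (b ^ n / (1 - z * (b ^ 2) ^ n) * (b ^ (n + d) / (1 - z * (b ^ 2) ^ (n + d)))) =
      b ^ d / (1 - b ^ (2 * d)) *
        ((1 - z * (b ^ 2) ^ n)⁻¹ - (1 - z * (b ^ 2) ^ (n + d))⁻¹) := by
  have hden₁ := sub_ne_zero.2 (hpole n).symm
  have hden₂ := sub_ne_zero.2 (hpole (n + d)).symm
  have hden₃ := one_sub_pow_ne_zero hb (mul_ne_zero two_ne_zero hd)
  have hsq : (b ^ 2) ^ n = (b ^ n) ^ 2 := by rw [sq, mul_zpow, sq]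
  have hsq_add : (b ^ 2) ^ (n + d) = (b ^ n) ^ 2 * (b ^ d) ^ 2 := by
    rw [zpow_add₀ (pow_ne_zero 2 hb₀), zpow_natCast, hsq, pow_right_comm]
  rw [hsq] at hden₁ ⊢
  rw [hsq_add] at hden₂ ⊢
  rw [pow_mul'] at hden₃ ⊢
  rw [zpow_add₀ hb₀, zpow_natCast]
  generalize b ^ n = s, b ^ d = t at hden₁ hden₂ hden₃ ⊢
  rw [← mul_assoc] at hden₂
  field_simp
  ring

theorem summable_norm_zpow_div_one_sub_sq (hb₀ : b ≠ 0) (hb : ‖b‖ < 1) (hz : z ≠ 0) :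
    Summable fun n : ℤ ↦ ‖b ^ n / (1 - z * (b ^ 2) ^ n)‖ :=
  summable_norm_zpow_div_one_sub (pow_ne_zero 2 hb₀) (norm_sq_lt_norm hb₀ hb) hb hz

variable [CompleteSpace 𝕜]

theorem tsum_zpow_div_one_sub_mul_shift (hb₀ : b ≠ 0) (hb : ‖b‖ < 1) (hz : z ≠ 0)
    (hpole : ∀ n : ℤ, z * (b ^ 2) ^ n ≠ 1) {d : ℕ} (hd : d ≠ 0) :
    z * ∑' n : ℤ, b ^ n / (1 - z * (b ^ 2) ^ n) * (b ^ (n + d) / (1 - z * (b ^ 2) ^ (n + d))) =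
      -(d * b ^ d / (1 - b ^ (2 * d))) := by
  have hb₂ := norm_pow_lt_one hb two_ne_zero
  have hb₂₀ := pow_ne_zero 2 hb₀
  have hnorm := summable_norm_zpow_div_one_sub_sq hb₀ hb hz
  have hsum : Summable fun n : ℤ ↦ (1 - z * (b ^ 2) ^ n)⁻¹ - (1 - z * (b ^ 2) ^ (n + 1))⁻¹ := by
    have hinj : Function.Injective fun n : ℤ ↦ (n, n + 1) := fun m n h ↦ congrArg Prod.fst h
    have hfactor : b ^ 1 / (1 - b ^ (2 * 1)) ≠ 0 :=
      div_ne_zero (pow_ne_zero 1 hb₀) (one_sub_pow_ne_zero hb two_ne_zero)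
    refine (summable_mul_left_iff hfactor).1 ?_
    exact (((summable_mul_of_summable_norm hnorm hnorm).comp_injective hinj).mul_left z).congr
      (mul_zpow_div_one_sub_mul_shift hb₀ hb hpole one_ne_zero)
  rw [← tsum_mul_left, tsum_congr (mul_zpow_div_one_sub_mul_shift hb₀ hb hpole hd), tsum_mul_left,
    (hasSum_int_sub_add hsum (tendsto_inv_one_sub_mul_zpow_neg hb₂₀ hb₂ hz)
      (by simpa using tendsto_inv_one_sub_mul_pow z hb₂) d).tsum_eq, nsmul_eq_mul]
  ring

/-- The diagonal of the squared series gives the first sum. Each off-diagonal telescopes, because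
`q = b ^ 2` makes the product of two terms at distance `d` a difference of simple fractions. -/
theorem mul_kroneckerSeries_sq (hb₀ : b ≠ 0) (hb : ‖b‖ < 1) (hz : z ≠ 0)
    (hpole : ∀ n : ℤ, z * (b ^ 2) ^ n ≠ 1) :
    z * kroneckerSeries b (b ^ 2) z ^ 2 =
      ∑' n : ℤ, z * (b ^ 2) ^ n / (1 - z * (b ^ 2) ^ n) ^ 2 -
        2 * ∑' d : ℕ, d * b ^ d / (1 - b ^ (2 * d)) := by
  have hdiag (n : ℤ) : z * (b ^ n / (1 - z * (b ^ 2) ^ n)) ^ 2 =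
      z * (b ^ 2) ^ n / (1 - z * (b ^ 2) ^ n) ^ 2 := by
    rw [div_pow, sq b, mul_zpow, ← sq, mul_div_assoc]
  have hshift : z * ∑' d : ℕ+, ∑' n : ℤ, b ^ n / (1 - z * (b ^ 2) ^ n) *
      (b ^ (n + d : ℤ) / (1 - z * (b ^ 2) ^ (n + d : ℤ))) =
      -∑' d : ℕ, d * b ^ d / (1 - b ^ (2 * d)) := by
    rw [← tsum_mul_left, ← tsum_neg,
      ← tsum_pnat_eq_tsum_of_eq_zero (f := fun d : ℕ ↦ -(d * b ^ d / (1 - b ^ (2 * d)))) (by simp)]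
    exact tsum_congr fun d ↦ tsum_zpow_div_one_sub_mul_shift hb₀ hb hz hpole d.ne_zero
  have hexpand := sq_tsum_int_eq (u := fun n : ℤ ↦ b ^ n / (1 - z * (b ^ 2) ^ n))
    (summable_norm_zpow_div_one_sub_sq hb₀ hb hz)
  rw [kroneckerSeries, hexpand, mul_add,
    mul_left_comm, hshift, ← tsum_mul_left, tsum_congr hdiag]
  ring

end KroneckerSquare

/-- The Lambert-type double series `∑ d x^(d m)` over odd `d, m ≥ 1`, that is `∑ σ₁(n) xⁿ` over odd
`n`. The index `(k, l)` stands for `d = 2k + 1`, `m = 2l + 1`. -/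
noncomputable def oddSigmaSeries {K : Type*} [Ring K] [TopologicalSpace K] (x : K) : K :=
  ∑' p : ℕ × ℕ, (2 * (p.1 : K) + 1) * x ^ ((2 * p.1 + 1) * (2 * p.2 + 1))

theorem two_mul_add_injective (r : ℕ) : Function.Injective fun n ↦ 2 * n + r :=
  fun _ _ h ↦ by simpa using h

section Lambert

variable {𝕜 : Type*} [NormedField 𝕜] {x : 𝕜}

theorem summable_norm_natCast_mul_pow_mul (hx : ‖x‖ < 1) :
    Summable fun p : ℕ × ℕ ↦ ‖(p.1 : 𝕜) * x ^ (p.1 * (2 * p.2 + 1))‖ := by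
  have hfst : Summable fun d : ℕ ↦ ‖(d : 𝕜) * x ^ d‖ := by
    simpa using summable_norm_pow_mul_geometric_of_norm_lt_one 1 hx
  refine Summable.of_nonneg_of_le (fun _ ↦ norm_nonneg _) (fun ⟨d, m⟩ ↦ ?_)
    (hfst.mul_of_nonneg (summable_geometric_of_lt_one (norm_nonneg x) hx)
      (fun _ ↦ norm_nonneg _) fun _ ↦ by positivity)
  rcases Nat.eq_zero_or_pos d with rfl | hd
  · simp
  · rw [norm_mul, norm_mul, norm_pow, norm_pow, mul_assoc, ← pow_add]
    exact mul_le_mul_of_nonneg_left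
      (pow_le_pow_of_le_one (norm_nonneg x) hx.le (by nlinarith)) (norm_nonneg _)

theorem tsum_one_sub_neg_one_pow_mul (x : 𝕜) :
    ∑' p : ℕ × ℕ, (1 - (-1) ^ p.1) * (p.1 * x ^ (p.1 * (2 * p.2 + 1))) = 2 * oddSigmaSeries x := by
  rw [← ((two_mul_add_injective 1).prodMap Function.injective_id).tsum_eq, oddSigmaSeries,
    ← tsum_mul_left]
  · refine tsum_congr fun p ↦ ?_
    simp only [Prod.map_fst, Prod.map_snd, id_eq]
    rw [Odd.neg_one_pow ⟨p.1, rfl⟩]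
    push_cast
    ring
  · rintro ⟨d, m⟩ hd
    rcases Nat.even_or_odd' d with ⟨k, rfl | rfl⟩
    · simp at hd
    · exact ⟨(k, m), rfl⟩

variable [CompleteSpace 𝕜]

theorem summable_natCast_mul_pow_mul (hx : ‖x‖ < 1) :
    Summable fun p : ℕ × ℕ ↦ (p.1 : 𝕜) * x ^ (p.1 * (2 * p.2 + 1)) :=
  (summable_norm_natCast_mul_pow_mul hx).of_norm

theorem summable_odd_mul_pow_odd_mul_odd (hx : ‖x‖ < 1) :
    Summable fun p : ℕ × ℕ ↦ (2 * (p.1 : 𝕜) + 1) * x ^ ((2 * p.1 + 1) * (2 * p.2 + 1)) := by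
  refine ((summable_natCast_mul_pow_mul hx).comp_injective
    ((two_mul_add_injective 1).prodMap Function.injective_id)).congr fun p ↦ ?_
  simp

theorem summable_neg_one_pow_mul_natCast_mul_pow_mul (hx : ‖x‖ < 1) :
    Summable fun p : ℕ × ℕ ↦ (-1) ^ p.1 * ((p.1 : 𝕜) * x ^ (p.1 * (2 * p.2 + 1))) :=
  .of_norm <| by simpa [norm_mul] using summable_norm_natCast_mul_pow_mul hx

theorem tsum_mul_pow_div_one_sub_pow_two_mul (hx : ‖x‖ < 1) :
    ∑' d : ℕ, d * x ^ d / (1 - x ^ (2 * d)) =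
      ∑' p : ℕ × ℕ, p.1 * x ^ (p.1 * (2 * p.2 + 1)) := by
  rw [(summable_natCast_mul_pow_mul hx).tsum_prod]
  refine tsum_congr fun d ↦ ?_
  rcases eq_or_ne d 0 with rfl | hd
  · simp
  have hnorm := norm_pow_lt_one hx (mul_ne_zero two_ne_zero hd)
  rw [div_eq_mul_inv, ← tsum_geometric_of_norm_lt_one hnorm, ← tsum_mul_left]
  exact tsum_congr fun m ↦ by ring

theorem hasSum_pow_div_one_add_pow_sq (hx : ‖x‖ < 1) :
    HasSum (fun m : ℕ ↦ x ^ (2 * m + 1) / (1 + x ^ (2 * m + 1)) ^ 2)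
      (-∑' p : ℕ × ℕ, (-1) ^ p.1 * (p.1 * x ^ (p.1 * (2 * p.2 + 1)))) := by
  have hfiber (m : ℕ) : HasSum (fun d : ℕ ↦ (-1) ^ d * (d * x ^ (d * (2 * m + 1))))
      (-(x ^ (2 * m + 1) / (1 + x ^ (2 * m + 1)) ^ 2)) := by
    have hnorm : ‖-x ^ (2 * m + 1)‖ < 1 := by
      simpa only [norm_neg] using norm_pow_lt_one hx (Nat.succ_ne_zero (2 * m))
    convert! hasSum_coe_mul_geometric_of_norm_lt_one hnorm using 1
    · ext d
      rw [neg_pow (x ^ _), ← pow_mul']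
      ring
    · rw [sub_neg_eq_add, neg_div]
  have hswap := (Equiv.prodComm ℕ ℕ).hasSum_iff.2
    (summable_neg_one_pow_mul_natCast_mul_pow_mul hx).hasSum
  simpa using (hswap.prod_fiberwise hfiber).neg

theorem tsum_int_zpow_div_one_add_zpow_sq (hx₀ : x ≠ 0) (hx : ‖x‖ < 1) :
    ∑' n : ℤ, x ^ (2 * n + 1) / (1 + x ^ (2 * n + 1)) ^ 2 =
      -2 * ∑' p : ℕ × ℕ, (-1) ^ p.1 * (p.1 * x ^ (p.1 * (2 * p.2 + 1))) := by
  have hnat := hasSum_pow_div_one_add_pow_sq hx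
  have hpos (m : ℕ) : x ^ (2 * (m : ℤ) + 1) = x ^ (2 * m + 1) := by
    exact_mod_cast zpow_natCast x (2 * m + 1)
  have hneg (m : ℕ) : x ^ (2 * (-(m + 1 : ℤ)) + 1) / (1 + x ^ (2 * (-(m + 1 : ℤ)) + 1)) ^ 2 =
      x ^ (2 * m + 1) / (1 + x ^ (2 * m + 1)) ^ 2 := by
    have hxm := pow_ne_zero (2 * m + 1) hx₀
    rw [show 2 * (-(m + 1 : ℤ)) + 1 = -(2 * m + 1 : ℕ) by push_cast; ring, zpow_neg, zpow_natCast,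
      show 1 + (x ^ (2 * m + 1))⁻¹ = (1 + x ^ (2 * m + 1)) / x ^ (2 * m + 1) by field_simp; ring]
    field_simp
  have hfold := HasSum.of_nat_of_neg_add_one
    (f := fun n : ℤ ↦ x ^ (2 * n + 1) / (1 + x ^ (2 * n + 1)) ^ 2)
    (by simpa only [hpos] using hnat) (by simpa only [hneg] using hnat)
  rw [hfold.tsum_eq]
  ring

theorem tsum_zpow_div_one_add_zpow_sq_add_two_mul_tsum (hx₀ : x ≠ 0) (hx : ‖x‖ < 1) :
    ∑' n : ℤ, x ^ (2 * n + 1) / (1 + x ^ (2 * n + 1)) ^ 2 +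
      2 * ∑' d : ℕ, d * x ^ d / (1 - x ^ (2 * d)) = 4 * oddSigmaSeries x := by
  rw [tsum_int_zpow_div_one_add_zpow_sq hx₀ hx, tsum_mul_pow_div_one_sub_pow_two_mul hx]
  have hodd := tsum_one_sub_neg_one_pow_mul x
  simp only [sub_mul, one_mul] at hodd
  rw [(summable_natCast_mul_pow_mul hx).tsum_sub
    (summable_neg_one_pow_mul_natCast_mul_pow_mul hx)] at hodd
  linear_combination 2 * hodd

end Lambert

section EtaQuotient

variable {𝕜 : Type*} [NormedField 𝕜] {x : 𝕜}

theorem neg_mul_sq_zpow (hx₀ : x ≠ 0) (n : ℤ) : -x * (x ^ 2) ^ n = -x ^ (2 * n + 1) := by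
  rw [zpow_add₀ hx₀, zpow_mul, zpow_one, zpow_ofNat]
  ring

theorem neg_mul_sq_zpow_ne_one (hx₀ : x ≠ 0) (hx : ‖x‖ < 1) (n : ℤ) : -x * (x ^ 2) ^ n ≠ 1 := by
  intro h
  have hnorm := congrArg norm h
  rw [neg_mul_sq_zpow hx₀, norm_neg, norm_zpow, norm_one,
    zpow_eq_one_iff_right₀ (norm_nonneg x) hx.ne] at hnorm
  omega

variable [CompleteSpace 𝕜]

theorem kroneckerSeries_sq_neg_eq (hx₀ : x ≠ 0) (hx : ‖x‖ < 1) :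
    kroneckerSeries x (x ^ 2) (-x) =
      2 * qPochhammerInf (x ^ 4) (x ^ 4) ^ 4 / qPochhammerInf (x ^ 2) (x ^ 2) ^ 2 := by
  have hq := norm_pow_lt_one hx two_ne_zero
  have hx₄ := norm_pow_lt_one hx four_ne_zero
  have hne : qPochhammerInf (x ^ 4) (x ^ 4) ≠ 0 :=
    qPochhammerInf_ne_zero hx₄ (one_sub_mul_pow_ne_zero hx₄ hx₄.le)
  have hneg_one : qPochhammerInf (-1) (x ^ 2) = 2 * qPochhammerInf (-x ^ 2) (x ^ 2) := by
    rw [qPochhammerInf_eq_one_sub_mul _ hq, neg_one_mul, sub_neg_eq_add, one_add_one_eq_two]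
  have hsq : qPochhammerInf (x ^ 2) (x ^ 2) * qPochhammerInf (-x ^ 2) (x ^ 2) =
      qPochhammerInf (x ^ 4) (x ^ 4) := by
    rw [qPochhammerInf_mul_neg _ hq, ← pow_mul]
  have hodd : qPochhammerInf x (x ^ 2) * qPochhammerInf (-x) (x ^ 2) =
      qPochhammerInf (x ^ 2) (x ^ 4) := by
    rw [qPochhammerInf_mul_neg _ hq, ← pow_mul]
  have heven : qPochhammerInf (x ^ 2) (x ^ 4) * qPochhammerInf (x ^ 4) (x ^ 4) =
      qPochhammerInf (x ^ 2) (x ^ 2) := by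
    rw [← qPochhammerInf_even_mul_odd (x ^ 2) hq, ← pow_mul, ← pow_add]
  have hdiv : x ^ 2 / (x * -x) = -1 ∧ x ^ 2 / x = x ∧ x ^ 2 / -x = -x := by
    refine ⟨?_, ?_, ?_⟩ <;> field_simp
  calc kroneckerSeries x (x ^ 2) (-x)
    _ = 2 * (qPochhammerInf (x ^ 2) (x ^ 2) * qPochhammerInf (-x ^ 2) (x ^ 2)) ^ 2 /
        (qPochhammerInf x (x ^ 2) * qPochhammerInf (-x) (x ^ 2)) ^ 2 := by
      rw [kroneckerSeries_eq (pow_ne_zero 2 hx₀) (norm_sq_lt_norm hx₀ hx) hx (neg_ne_zero.2 hx₀)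
        (neg_mul_sq_zpow_ne_one hx₀ hx), hdiv.1, hdiv.2.1, hdiv.2.2, hneg_one, mul_neg, ← sq]
      ring
    _ = 2 * qPochhammerInf (x ^ 4) (x ^ 4) ^ 2 / qPochhammerInf (x ^ 2) (x ^ 4) ^ 2 := by
      rw [hsq, hodd]
    _ = _ := by
      rw [← heven]
      field_simp

theorem mul_kroneckerSeries_sq_neg_sq (hx₀ : x ≠ 0) (hx : ‖x‖ < 1) :
    x * kroneckerSeries x (x ^ 2) (-x) ^ 2 = 4 * oddSigmaSeries x := by
  have hsq := mul_kroneckerSeries_sq hx₀ hx (neg_ne_zero.2 hx₀) (neg_mul_sq_zpow_ne_one hx₀ hx)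
  simp only [neg_mul_sq_zpow hx₀, sub_neg_eq_add, neg_div, tsum_neg] at hsq
  linear_combination -hsq + tsum_zpow_div_one_add_zpow_sq_add_two_mul_tsum hx₀ hx

theorem oddSigmaSeries_eq [CharZero 𝕜] (hx : ‖x‖ < 1) :
    oddSigmaSeries x =
      x * qPochhammerInf (x ^ 4) (x ^ 4) ^ 8 / qPochhammerInf (x ^ 2) (x ^ 2) ^ 4 := by
  rcases eq_or_ne x 0 with rfl | hx₀
  · simp [oddSigmaSeries]
  refine mul_left_cancel₀ (by norm_num : (4 : 𝕜) ≠ 0) ?_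
  rw [← mul_kroneckerSeries_sq_neg_sq hx₀ hx, kroneckerSeries_sq_neg_eq hx₀ hx]
  ring

end EtaQuotient

section Parity

variable {E : Type*} [AddCommGroup E] [UniformSpace E] [IsUniformAddGroup E] [CompleteSpace E]
  [T2Space E]

theorem tsum_prod_nat_even_add_odd {ι : Type*} {f : ι × ℕ → E} (hf : Summable f) :
    ∑' p : ι × ℕ, f (p.1, 2 * p.2) + ∑' p : ι × ℕ, f (p.1, 2 * p.2 + 1) = ∑' p, f p := by
  have hhalf (r : ℕ) : Summable fun p : ι × ℕ ↦ f (p.1, 2 * p.2 + r) :=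
    hf.comp_injective (Function.injective_id.prodMap (two_mul_add_injective r))
  have heven : Summable fun p : ι × ℕ ↦ f (p.1, 2 * p.2) := hhalf 0
  have hodd := hhalf 1
  rw [hf.tsum_prod, heven.tsum_prod, hodd.tsum_prod, ← heven.prod.tsum_add hodd.prod]
  exact tsum_congr fun i ↦
    tsum_even_add_odd (f := fun n ↦ f (i, n)) (heven.prod_factor i) (hodd.prod_factor i)

theorem tsum_nat_prod_even_add_odd {ι : Type*} {f : ℕ × ι → E} (hf : Summable f) :
    ∑' p : ℕ × ι, f (2 * p.1, p.2) + ∑' p : ℕ × ι, f (2 * p.1 + 1, p.2) = ∑' p, f p := by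
  have hswap := tsum_prod_nat_even_add_odd ((Equiv.prodComm ι ℕ).summable_iff.2 hf)
  rw [← (Equiv.prodComm ι ℕ).tsum_eq f, ← (Equiv.prodComm ι ℕ).tsum_eq,
    ← (Equiv.prodComm ι ℕ).tsum_eq fun p : ℕ × ι ↦ f (2 * p.1 + 1, p.2)]
  exact hswap

theorem tsum_nat_prod_nat_eq_parity {f : ℕ × ℕ → E} (hf : Summable f) :
    ∑' p, f p =
      (∑' p : ℕ × ℕ, f (2 * p.1, 2 * p.2) + ∑' p : ℕ × ℕ, f (2 * p.1, 2 * p.2 + 1)) +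
      (∑' p : ℕ × ℕ, f (2 * p.1 + 1, 2 * p.2) +
        ∑' p : ℕ × ℕ, f (2 * p.1 + 1, 2 * p.2 + 1)) := by
  have hhalf (r : ℕ) : Summable fun p : ℕ × ℕ ↦ f (2 * p.1 + r, p.2) :=
    hf.comp_injective ((two_mul_add_injective r).prodMap Function.injective_id)
  have heven : Summable fun p : ℕ × ℕ ↦ f (2 * p.1, p.2) := hhalf 0
  rw [← tsum_nat_prod_even_add_odd hf, ← tsum_prod_nat_even_add_odd heven,
    ← tsum_prod_nat_even_add_odd (hhalf 1)]

end Parity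

section Potential

variable {x : ℂ}

theorem eulerF_eq_qPochhammerInf (x : ℂ) : eulerF x = qPochhammerInf x x :=
  tprod_congr fun n ↦ by rw [pow_succ']

theorem four_mul_Psi2222 (hx : ‖x‖ < 1) :
    4 * Psi2222 x =
      ∑' p : ℕ × ℕ, (4 * (p.1 : ℂ) + 1) * x ^ ((4 * p.1 + 1) * (4 * p.2 + 3)) +
        ∑' p : ℕ × ℕ, (4 * (p.1 : ℂ) + 3) * x ^ ((4 * p.1 + 3) * (4 * p.2 + 1)) := by
  have hsum (r s : ℕ) := (summable_odd_mul_pow_odd_mul_odd hx).comp_injective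
    ((two_mul_add_injective r).prodMap (two_mul_add_injective s))
  have hleft : Summable fun p : ℕ × ℕ ↦
      (4 * (p.1 : ℂ) + 1) * x ^ ((4 * p.1 + 1) * (4 * p.2 + 3)) := (hsum 0 1).congr fun p ↦ by
    simp only [Function.comp_apply, Prod.map_fst, Prod.map_snd]
    push_cast
    ring
  have hright : Summable fun p : ℕ × ℕ ↦
      (4 * (p.2 : ℂ) + 3) * x ^ ((4 * p.2 + 3) * (4 * p.1 + 1)) :=
    (Equiv.prodComm ℕ ℕ).summable_iff.1 <| (hsum 1 0).congr fun p ↦ by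
      simp only [Function.comp_apply, Prod.map_fst, Prod.map_snd, Equiv.prodComm_apply,
        Prod.fst_swap, Prod.snd_swap]
      push_cast
      ring
  have hswap : ∑' p : ℕ × ℕ, (4 * (p.1 : ℂ) + 3) * x ^ ((4 * p.1 + 3) * (4 * p.2 + 1)) =
      ∑' p : ℕ × ℕ, (4 * (p.2 : ℂ) + 3) * x ^ ((4 * p.2 + 3) * (4 * p.1 + 1)) :=
    ((Equiv.prodComm ℕ ℕ).tsum_eq _).symm
  rw [hswap, ← hleft.tsum_add hright, Psi2222, ← tsum_mul_left]
  refine tsum_congr fun p ↦ ?_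
  rw [mul_comm (4 * p.2 + 3)]
  ring

theorem Phi2222_add_four_mul_Psi2222 (hx : ‖x‖ < 1) :
    Phi2222 x + 4 * Psi2222 x = oddSigmaSeries x := by
  have hsplit := tsum_nat_prod_nat_eq_parity
    (f := fun p : ℕ × ℕ ↦ (2 * (p.1 : ℂ) + 1) * x ^ ((2 * p.1 + 1) * (2 * p.2 + 1)))
    (summable_odd_mul_pow_odd_mul_odd hx)
  have hone (k : ℕ) : 2 * (2 * k) + 1 = 4 * k + 1 := by ring
  have hthree (k : ℕ) : 2 * (2 * k + 1) + 1 = 4 * k + 3 := by ring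
  have hcast_one (k : ℕ) : 2 * ((2 * k : ℕ) : ℂ) + 1 = 4 * k + 1 := by exact_mod_cast hone k
  have hcast_three (k : ℕ) : 2 * ((2 * k + 1 : ℕ) : ℂ) + 1 = 4 * k + 3 := by
    exact_mod_cast hthree k
  simp only [hone, hthree, hcast_one, hcast_three] at hsplit
  rw [oddSigmaSeries, hsplit, four_mul_Psi2222 hx, Phi2222]
  abel

end Potential

/-- `Φ(x) + 4Ψ(x) = x F(x⁴)⁸/F(x²)⁴`, i.e. `ψ + 4φ = η(q_d⁴)⁸/η(q_d²)⁴`. -/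
theorem phi_add_four_psi (x : ℂ) (hx : ‖x‖ < 1) :
    Phi2222 x + 4 * Psi2222 x = x * eulerF (x ^ 4) ^ 8 / eulerF (x ^ 2) ^ 4 := by
  rw [Phi2222_add_four_mul_Psi2222 hx, oddSigmaSeries_eq hx, eulerF_eq_qPochhammerInf,
    eulerF_eq_qPochhammerInf]
end

section
/- Let ψ(x) = −x + Σ_{k=1}^∞ [ (−1)^{k+1}(6k+1) x^{(6k+1)²} + (−1)^{k}(6k−1) x^{(6k−1)²} ] and F(x) = ∏_{n=1}^∞ (1 − xⁿ). Then for every complex number x with |x| < 1, the two-sided series Σ_{k∈ℤ} (−1)^{k+1} (2k+1) x^{(6k+1)²} satisfies 3 · Σ_{k∈ℤ} (−1)^{k+1} (2k+1) x^{(6k+1)²} = ψ(x) − 2 x · F(x^{24}). -/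
/-!
Extended to negative indices, the series `ψ` becomes `∑ k : ℤ, (-1) ^ (k + 1) * (6k + 1) * X k`
with `X k = x ^ (6k + 1) ^ 2`. Since `(6k + 1) ^ 2 = 24 * (k(3k + 1) / 2) + 1`, Euler's pentagonal
number theorem gives `x * F(x ^ 24) = ∑ k : ℤ, (-1) ^ k * X k`. The identity then holds term by
term, because `3 * (2k + 1) = (6k + 1) + 2`.
-/

open scoped BigOperators

/-- The coefficient `ψ(x) = −x + Σ_{k=1}^∞ [(−1)^{k+1}(6k+1) x^{(6k+1)²}
+ (−1)^{k}(6k−1) x^{(6k−1)²}]` of (minus) `xyz` in the open Gromov–Witten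
potential of `ℙ¹_{3,3,3}` (summation reindexed by `k = j + 1`). -/
noncomputable def psi333 (x : ℂ) : ℂ :=
  -x + ∑' j : ℕ,
    ((-1 : ℂ) ^ (j + 2) * (6 * (j : ℂ) + 7) * x ^ ((6 * j + 7) ^ 2)
      + (-1 : ℂ) ^ (j + 1) * (6 * (j : ℂ) + 5) * x ^ ((6 * j + 5) ^ 2))

open Filter Asymptotics Topology

lemma hasSum_nat_succ_add_neg_succ {G : Type*} [AddCommGroup G] [TopologicalSpace G]
    [IsTopologicalAddGroup G] {f : ℤ → G} {a : G} (hf : HasSum f a) :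
    HasSum (fun n : ℕ ↦ f (n + 1) + f (-(n + 1))) (a - f 0) := by
  simpa using (hasSum_nat_add_iff' 1).2 hf.nat_add_neg

section NormedRing

variable {ι R : Type*} [NormedRing R] [NormOneClass R] {x : R}

lemma norm_pow_le_pow_of_le (hx : ‖x‖ ≤ 1) {m n : ℕ} (hmn : m ≤ n) : ‖x ^ n‖ ≤ ‖x‖ ^ m :=
  (norm_pow_le x n).trans (pow_le_pow_of_le_one (norm_nonneg x) hx hmn)

lemma summable_mul_pow_of_isBigO [CompleteSpace R] (hx : ‖x‖ < 1) {e : ι → ℕ}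
    (he : Function.Injective e) {c : ι → R} {m : ℕ} (hc : c =O[cofinite] fun i ↦ (e i : ℝ) ^ m) :
    Summable fun i ↦ c i * x ^ e i := by
  have hgeom : Summable fun n : ℕ ↦ (n : ℝ) ^ m * ‖x‖ ^ n :=
    summable_pow_mul_geometric_of_norm_lt_one m (by simpa using hx)
  have hpow : (fun i ↦ x ^ e i) =O[cofinite] fun i ↦ ‖x‖ ^ e i :=
    .of_bound' (.of_forall fun i ↦ by simpa using norm_pow_le x (e i))
  exact summable_of_isBigO (hgeom.comp_injective he) (hc.mul hpow)

end NormedRing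

section PentagonalNumberTheorem

variable {ι R : Type*} [NormedCommRing R] [NormOneClass R] {x : R}

lemma norm_prod_one_sub_le_exp (s : Finset ι) (f : ι → R) :
    ‖∏ i ∈ s, (1 - f i)‖ ≤ Real.exp (∑ i ∈ s, ‖f i‖) := by
  have h := s.norm_prod_one_add_sub_one_le (-f)
  simp only [Pi.neg_apply, norm_neg, ← sub_eq_add_neg] at h
  have htri := norm_le_norm_sub_add (∏ i ∈ s, (1 - f i)) 1
  rw [norm_one] at htri
  linarith

lemma norm_prod_one_sub_pow_le (hx : ‖x‖ < 1) (s : Finset ι) {e : ι → ℕ}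
    (he : Function.Injective e) :
    ‖∏ i ∈ s, (1 - x ^ e i)‖ ≤ Real.exp (1 - ‖x‖)⁻¹ := by
  have hgeom : Summable (‖x‖ ^ · : ℕ → ℝ) := summable_geometric_of_lt_one (norm_nonneg x) hx
  refine (norm_prod_one_sub_le_exp s _).trans (Real.exp_le_exp.2 ?_)
  calc ∑ i ∈ s, ‖x ^ e i‖
      ≤ ∑ i ∈ s, ‖x‖ ^ e i := Finset.sum_le_sum fun i _ ↦ norm_pow_le x (e i)
    _ ≤ ∑' i, ‖x‖ ^ e i :=
        (hgeom.comp_injective he).sum_le_tsum s fun i _ ↦ pow_nonneg (norm_nonneg x) (e i)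
    _ ≤ ∑' n : ℕ, ‖x‖ ^ n :=
        tsum_comp_le_tsum_of_inj hgeom (fun n ↦ pow_nonneg (norm_nonneg x) n) he
    _ = (1 - ‖x‖)⁻¹ := tsum_geometric_of_lt_one (norm_nonneg x) hx

lemma norm_pow_mul_prod_one_sub_pow_le (hx : ‖x‖ < 1) (k n : ℕ) :
    ‖x ^ ((k + 1) * n) * ∏ i ∈ Finset.range (n + 1), (1 - x ^ (k + i + 1))‖ ≤
      ‖x‖ ^ n * Real.exp (1 - ‖x‖)⁻¹ := by
  have hpow : ‖x ^ ((k + 1) * n)‖ ≤ ‖x‖ ^ n :=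
    norm_pow_le_pow_of_le hx.le (Nat.le_mul_of_pos_left n k.succ_pos)
  have hprod := norm_prod_one_sub_pow_le hx (Finset.range (n + 1)) (e := fun i ↦ k + i + 1)
    fun i j hij ↦ by simpa using hij
  exact (norm_mul_le _ _).trans (by gcongr)

-- The remainder after `k + 1` steps of the recurrence behind `Pentagonal.tprod_one_sub_pow`.
lemma tendsto_neg_one_pow_mul_pow_mul_tsum (hx : ‖x‖ < 1) :
    Tendsto (fun k : ℕ ↦ (-1) ^ (k + 1) * x ^ ((k + 1) * (3 * k + 4) / 2) *
      ∑' n : ℕ, x ^ ((k + 1) * n) * ∏ i ∈ Finset.range (n + 1), (1 - x ^ (k + i + 1)))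
      atTop (𝓝 0) := by
  set C := Real.exp (1 - ‖x‖)⁻¹
  have hgeom : Summable fun n : ℕ ↦ ‖x‖ ^ n * C :=
    (summable_geometric_of_lt_one (norm_nonneg x) hx).mul_right C
  have hlim : Tendsto (fun k : ℕ ↦ ‖x‖ ^ k * ∑' n : ℕ, ‖x‖ ^ n * C) atTop (𝓝 0) := by
    simpa using (tendsto_pow_atTop_nhds_zero_of_lt_one (norm_nonneg x) hx).mul_const _
  refine squeeze_zero_norm (fun k ↦ ?_) hlim
  have hexp : k ≤ (k + 1) * (3 * k + 4) / 2 := by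
    rw [Nat.le_div_iff_mul_le two_pos]
    nlinarith
  have hpow : ‖(-1) ^ (k + 1) * x ^ ((k + 1) * (3 * k + 4) / 2)‖ ≤ ‖x‖ ^ k := by
    rcases neg_one_pow_eq_or R (k + 1) with h | h <;>
      simpa [h] using norm_pow_le_pow_of_le hx.le hexp
  have htsum := tsum_of_norm_bounded hgeom.hasSum (norm_pow_mul_prod_one_sub_pow_le hx k)
  exact (norm_mul_le _ _).trans (by gcongr)

variable [CompleteSpace R]

lemma multipliable_one_sub_pow_add (hx : ‖x‖ < 1) (k : ℕ) :
    Multipliable fun n : ℕ ↦ 1 - x ^ (n + k + 1) := by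
  simp_rw [sub_eq_add_neg]
  refine multipliable_one_add_of_summable ?_
  simp_rw [norm_neg]
  exact (summable_norm_geometric_of_norm_lt_one hx).comp_injective
    (add_left_injective (k + 1))

lemma summable_negOnePow_mul_pow_pentagonal (hx : ‖x‖ < 1) :
    Summable fun k : ℤ ↦ (k.negOnePow : R) * x ^ pentagonal k := by
  refine summable_mul_pow_of_isBigO hx pentagonal_injective (m := 0) ?_
  refine .of_bound' (.of_forall fun k ↦ ?_)
  rcases k.even_or_odd with hk | hk <;> simp [Int.negOnePow_even, Int.negOnePow_odd, hk]

theorem hasSum_negOnePow_mul_pow_pentagonal (hx : ‖x‖ < 1) :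
    HasSum (fun k : ℤ ↦ (k.negOnePow : R) * x ^ pentagonal k) (∏' n : ℕ, (1 - x ^ (n + 1))) := by
  -- `Pentagonal.tprod_one_sub_pow` pairs the indices `-k` and `k + 1`, hence the reflection.
  have hsum := (Equiv.neg ℤ).summable_iff.2 (summable_negOnePow_mul_pow_pentagonal hx)
  have hpair (k : ℕ) :
      ((-k : ℤ).negOnePow : R) * x ^ pentagonal (-k) +
          ((- -(k + 1 : ℤ)).negOnePow : R) * x ^ pentagonal (- -(k + 1 : ℤ)) =
        (-1) ^ k * (x ^ pentagonal (-k) - x ^ pentagonal (k + 1)) := by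
    simp only [Int.negOnePow_neg, neg_neg, Int.negOnePow_succ, Units.val_neg, Int.cast_neg,
      Int.cast_negOnePow_natCast]
    ring
  have hnat := hsum.hasSum.nat_add_neg_add_one
  simp only [Function.comp_apply, Equiv.neg_apply, hpair] at hnat
  have hgeom := (summable_geometric_of_lt_one (norm_nonneg x) hx).mul_right
    (Real.exp (1 - ‖x‖)⁻¹)
  rw [Pentagonal.tprod_one_sub_pow (tendsto_pow_atTop_nhds_zero_of_norm_lt_one hx)
    (fun k ↦ .of_norm_bounded hgeom (norm_pow_mul_prod_one_sub_pow_le hx k))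
    (multipliable_one_sub_pow_add hx) hnat.summable (tendsto_neg_one_pow_mul_pow_mul_tsum hx),
    hnat.tsum_eq]
  exact (Equiv.neg ℤ).hasSum_iff.1 hsum.hasSum

end PentagonalNumberTheorem

lemma six_mul_add_one_sq_eq_pentagonal_neg (k : ℤ) :
    (6 * k + 1) ^ 2 = 24 * (pentagonal (-k) : ℤ) + 1 := by
  linear_combination -12 * two_mul_natCast_pentagonal_neg k

lemma zpow_six_mul_add_one_sq {G : Type*} [DivInvMonoid G] (x : G) (k : ℤ) :
    x ^ ((6 * k + 1) ^ 2) = x ^ (24 * pentagonal (-k) + 1) := by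
  rw [six_mul_add_one_sq_eq_pentagonal_neg]
  exact_mod_cast zpow_natCast x _

section NormedField

variable {K : Type*} [NormedField K] [CompleteSpace K] {x : K}

theorem hasSum_neg_one_zpow_mul_zpow_six_mul_add_one_sq (hx : ‖x‖ < 1) :
    HasSum (fun k : ℤ ↦ (-1) ^ k * x ^ ((6 * k + 1) ^ 2))
      (x * ∏' n : ℕ, (1 - (x ^ 24) ^ (n + 1))) := by
  have hx24 : ‖x ^ 24‖ < 1 := by
    simpa using pow_lt_one₀ (norm_nonneg x) hx (by norm_num : 24 ≠ 0)
  have h := ((Equiv.neg ℤ).hasSum_iff.2 (hasSum_negOnePow_mul_pow_pentagonal hx24)).mul_left x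
  refine h.congr_fun fun k ↦ ?_
  simp only [Function.comp_apply, Equiv.neg_apply, Int.negOnePow_neg]
  rw [zpow_six_mul_add_one_sq, Int.cast_negOnePow]
  ring

lemma summable_mul_zpow_six_mul_add_one_sq (hx : ‖x‖ < 1) {c : ℤ → K} {m : ℕ}
    (hc : c =O[cofinite] fun k ↦ (k : ℝ) ^ m) :
    Summable fun k : ℤ ↦ c k * x ^ ((6 * k + 1) ^ 2) := by
  simp_rw [zpow_six_mul_add_one_sq]
  refine summable_mul_pow_of_isBigO (m := m) hx (fun k l h ↦ by simpa using h) (hc.trans ?_)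
  refine .pow (.of_bound' (.of_forall fun k ↦ ?_)) m
  have habs : |k| ≤ 24 * (pentagonal (-k) : ℤ) + 1 := by
    rw [← six_mul_add_one_sq_eq_pentagonal_neg]
    exact abs_le.2 ⟨by nlinarith, by nlinarith⟩
  rw [Real.norm_natCast, Real.norm_eq_abs]
  exact_mod_cast habs

end NormedField

lemma isBigO_neg_one_zpow_mul_six_mul_add_one :
    (fun k : ℤ ↦ (-1 : ℂ) ^ (k + 1) * (6 * k + 1)) =O[cofinite] fun k ↦ (k : ℝ) ^ 1 := by
  refine .of_bound 7 ((eventually_cofinite_ne 0).mono fun k hk ↦ ?_)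
  have hk' : (1 : ℝ) ≤ |(k : ℝ)| := by exact_mod_cast Int.one_le_abs hk
  calc ‖(-1 : ℂ) ^ (k + 1) * (6 * k + 1)‖
      ≤ 6 * |(k : ℝ)| + 1 := by simpa using norm_add_le (6 * k : ℂ) 1
    _ ≤ 7 * ‖(k : ℝ) ^ 1‖ := by
        rw [pow_one, Real.norm_eq_abs]
        linarith

theorem hasSum_psi333 {x : ℂ} (hx : ‖x‖ < 1) :
    HasSum (fun k : ℤ ↦ (-1) ^ (k + 1) * (6 * k + 1) * x ^ ((6 * k + 1) ^ 2)) (psi333 x) := by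
  set f : ℤ → ℂ := fun k ↦ (-1) ^ (k + 1) * (6 * k + 1) * x ^ ((6 * k + 1) ^ 2) with hf
  have hsum : Summable f :=
    summable_mul_zpow_six_mul_add_one_sq hx isBigO_neg_one_zpow_mul_six_mul_add_one
  have hzero : f 0 = -x := by simp [hf]
  have hpos (j : ℕ) : f (j + 1) = (-1) ^ (j + 2) * (6 * j + 7) * x ^ ((6 * j + 7) ^ 2) := by
    have hsq : (6 * (j + 1 : ℤ) + 1) ^ 2 = ((6 * j + 7) ^ 2 : ℕ) := by push_cast; ring
    have hsign : (j + 1 + 1 : ℤ) = (j + 2 : ℕ) := by push_cast; ring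
    simp only [hf, hsq, hsign, zpow_natCast]
    push_cast
    ring
  have hneg (j : ℕ) :
      f (-(j + 1)) = (-1) ^ (j + 1) * (6 * j + 5) * x ^ ((6 * j + 5) ^ 2) := by
    have hsq : (6 * -(j + 1 : ℤ) + 1) ^ 2 = ((6 * j + 5) ^ 2 : ℕ) := by push_cast; ring
    have hsign : (-1 : ℂ) ^ (-(j + 1 : ℤ) + 1) = (-1) ^ j := by simp [← inv_pow]
    simp only [hf, hsq, hsign, zpow_natCast]
    push_cast
    ring
  have hpsi : psi333 x = f 0 + ∑' j : ℕ, (f (j + 1) + f (-(j + 1))) := by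
    simp only [psi333, hzero, hpos, hneg]
  rw [hpsi, (hasSum_nat_succ_add_neg_succ hsum.hasSum).tsum_eq, add_sub_cancel]
  exact hsum.hasSum

/-- `3 Σ_{k∈ℤ} (−1)^{k+1}(2k+1) x^{(6k+1)²} = ψ(x) − 2x F(x²⁴)`: three times the
coefficient of `yz` in the matrix-factorization entry `w_x` for `ℙ¹_{3,3,3}`
equals `ψ(x) − 2η(q)` with `q = x²⁴`. -/
theorem coeff_yz_of_wx (x : ℂ) (hx : ‖x‖ < 1) :
    3 * ∑' k : ℤ, (-1 : ℂ) ^ (k + 1) * (2 * (k : ℂ) + 1) * x ^ ((6 * k + 1) ^ 2)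
      = psi333 x - 2 * x * eulerF (x ^ 24) := by
  have hη : HasSum (fun k : ℤ ↦ (-1) ^ k * x ^ ((6 * k + 1) ^ 2)) (x * eulerF (x ^ 24)) :=
    hasSum_neg_one_zpow_mul_zpow_six_mul_add_one_sq hx
  have hterm (k : ℤ) : 3 * ((-1 : ℂ) ^ (k + 1) * (2 * k + 1) * x ^ ((6 * k + 1) ^ 2)) =
      (-1) ^ (k + 1) * (6 * k + 1) * x ^ ((6 * k + 1) ^ 2) -
        2 * ((-1) ^ k * x ^ ((6 * k + 1) ^ 2)) := by
    rw [zpow_add_one₀ (by norm_num)]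
    ring
  rw [← tsum_mul_left, tsum_congr hterm, ((hasSum_psi333 hx).sub (hη.mul_left 2)).tsum_eq,
    mul_assoc]
end
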